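/- arXiv:2008.09364 — 5 statements merged into one kernel-verified Lean document; each statement's English description precedes it below -/
import Mathlib

section
/- Let p/q be an irreducible fraction with 0 < p < q and gcd(p,q) = 1. Then i(w(p/q)) = w((q−p)/q), where i(u) denotes the word obtained from an LR word u by replacing every letter L by R and every letter R by L. -/
/-- The two-letter alphabet for `LR` words. -/
inductive LR : Type
  | L : LR
  | R : LR
  deriving DecidableEq

/-- The operation `i`: replace every `L` by `R` and every `R` by `L`. -/
def LR.flip : LR → LR
  | .L => .R
  | .R => .L

/-- The Stern–Brocot path (recorded from the root `1/2` downwards) of the fraction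
`p/q ∈ (0,1)`: at each step we pass to the left or right subinterval. -/
def sbPath (p q : ℕ) : List LR :=
  if h1 : 0 < p ∧ p + p < q then
    LR.L :: sbPath p (q - p)
  else if h2 : p < q ∧ q < p + p then
    LR.R :: sbPath (p + p - q) p
  else []
termination_by q
decreasing_by
  · omega
  · omega

/-- The `LR` word `w(α)` of a rational `α ∈ (0,1)`: the sequence of `L`/`R` steps from
the vertex `1/2` of the Stern–Brocot tree down to `α`, arranged from right to left.
It satisfies `w(1/2) = ∅` and, if `α` has parents `(β, γ)` with reduced denominators
`b < c` (resp. `b > c`), `w(α) = L · w(γ)` (resp. `w(α) = R · w(β)`). -/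
def w (α : ℚ) : List LR := (sbPath α.num.toNat α.den).reverse

theorem sbPath_flip (n : ℕ) : ∀ p q : ℕ, q ≤ n → 0 < p → p < q →
    (sbPath p q).map LR.flip = sbPath (q - p) q := by
  induction n with
  | zero => intro p q h1 h2 h3; omega
  | succ n ih =>
    intro p q hq hp hpq
    rw [sbPath, sbPath.eq_1 (q - p) q]
    rcases lt_trichotomy (p + p) q with h | h | h
    · rw [dif_pos ⟨hp, h⟩, dif_neg (by omega), dif_pos (by omega), List.map_cons,
        ih p (q - p) (by omega) hp (by omega)]
      have e : q - p + (q - p) - q = q - p - p := by omega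
      rw [e]; rfl
    · rw [dif_neg (by omega), dif_neg (by omega), dif_neg (by omega), dif_neg (by omega)]; rfl
    · rw [dif_neg (by omega), dif_pos (by omega), dif_pos (by omega), List.map_cons,
        ih (p + p - q) p (by omega) (by omega) (by omega)]
      have e : p - (p + p - q) = q - p := by omega
      have e2 : q - (q - p) = p := by omega
      rw [e, e2]; rfl

theorem w_div (p q : ℕ) (hq : 0 < q) (h : Nat.Coprime p q) :
    w ((p : ℚ) / (q : ℚ)) = (sbPath p q).reverse := by
  have h1 : ((p : ℚ) / (q : ℚ)).num = p := by
    have := Rat.num_div_eq_of_coprime (a := (p : ℤ)) (b := (q : ℤ)) (by omega) (by simpa using h)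
    simpa using this
  have h2 : ((p : ℚ) / (q : ℚ)).den = q := by
    have := Rat.den_div_eq_of_coprime (a := (p : ℤ)) (b := (q : ℤ)) (by omega) (by simpa using h)
    rw [Int.cast_natCast, Int.cast_natCast] at this
    exact Int.ofNat.inj this
  rw [w, h1, h2]; rfl

/-- for an irreducible fraction `p/q` with `0 < p < q`,
`i(w(p/q)) = w((q-p)/q)`. -/
theorem i_word_eq (p q : ℕ) (hp : 0 < p) (hpq : p < q) (hcop : Nat.Coprime p q) :
    (w ((p : ℚ) / (q : ℚ))).map LR.flip = w (((q - p : ℕ) : ℚ) / (q : ℚ)) := by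
  rw [w_div p q (by omega) hcop, w_div (q - p) q (by omega)
    ((Nat.coprime_self_sub_left hpq.le).2 hcop), List.map_reverse,
    sbPath_flip q p q le_rfl hp hpq]
end

section
/- Let p/q be an irreducible fraction with 0 < p < q and gcd(p,q) = 1, and let (x/r, y/s) be its pair of parents. Then r(w(p/q)) = w(r/q), where r(u) denotes the reversal of an LR word u. -/
/-- `(x/r, y/s)` is the pair of parents of `α`: they are Farey neighbors
(`x, y ≥ 0`, `r, s ≥ 1`, `r*y - x*s = 1`) and `α` is their Farey mediant. -/
def IsParents (x r y s : ℕ) (α : ℚ) : Prop :=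
  1 ≤ r ∧ 1 ≤ s ∧ r * y = x * s + 1 ∧
    α = ((x : ℚ) + (y : ℚ)) / ((r : ℚ) + (s : ℚ))

theorem sbPath_L (p q d : ℕ) (hp : 0 < p) (h : p < d) (hq : q = p + d) :
    sbPath p q = LR.L :: sbPath p d := by
  subst hq
  rw [sbPath, dif_pos ⟨hp, by omega⟩, Nat.add_sub_cancel_left]

theorem sbPath_R (p q k : ℕ) (h1 : p < q) (h2 : 0 < k) (hk : k + q = p + p) :
    sbPath p q = LR.R :: sbPath k p := by
  rw [sbPath, dif_neg (by omega), dif_pos ⟨h1, by omega⟩]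
  congr 2
  omega

theorem sbPath_half : sbPath 1 2 = [] := by
  rw [sbPath]; simp

theorem farey_half (x r y s : ℕ) (hr : 1 ≤ r) (hs : 1 ≤ s)
    (h : r * y = x * s + 1) :
    2 * y ≤ s ∨ r ≤ 2 * x ∨ (x = 0 ∧ r = 1 ∧ y = 1 ∧ s = 1) := by
  by_cases h1 : 2 * y ≤ s
  · exact Or.inl h1
  by_cases h2 : r ≤ 2 * x
  · exact Or.inr (Or.inl h2)
  right; right
  obtain ⟨a, ha⟩ : ∃ a, r = 2 * x + 1 + a := ⟨r - (2 * x + 1), by omega⟩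
  obtain ⟨b, hb⟩ : ∃ b, 2 * y = s + 1 + b := ⟨2 * y - (s + 1), by omega⟩
  have e : r * (1 + b) + s * (1 + a) = 2 := by
    have h3 : r * (2 * y) = 2 * x * s + 2 := by linarith
    rw [hb] at h3
    have h4 : r * s = (2 * x + 1 + a) * s := by rw [← ha]
    nlinarith
  have : r + s ≤ 2 := by nlinarith [Nat.zero_le (r * b), Nat.zero_le (s * a)]
  have hr1 : r = 1 := by omega
  have hs1 : s = 1 := by omega
  subst hr1 hs1
  omega

theorem sbPath_append (n : ℕ) : ∀ (x r y s : ℕ), r + s ≤ n → 1 ≤ r → 1 ≤ s → y ≤ s →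
    r * y = x * s + 1 →
    sbPath (x + (x + y)) (r + (r + s)) = sbPath (x + y) (r + s) ++ [LR.L] ∧
    sbPath (x + y + y) (r + s + s) = sbPath (x + y) (r + s) ++ [LR.R] := by
  induction n with
  | zero => intros; omega
  | succ n ih =>
    intro x r y s hn hr hs hys h
    have hy : 1 ≤ y := by
      rcases Nat.eq_zero_or_pos y with h0 | h0
      · subst h0; omega
      · exact h0
    have hxr : x < r := by
      by_contra hc
      have := Nat.mul_le_mul (not_lt.mp hc) hys
      omega
    rcases farey_half x r y s hr hs h with h1 | h1 | ⟨rfl, rfl, rfl, rfl⟩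
    · have h2 : 2 * x < r := by
        by_contra hc
        have := Nat.mul_le_mul (not_lt.mp hc) h1
        nlinarith
      obtain ⟨r', rfl⟩ : ∃ r', r = x + r' := ⟨r - x, by omega⟩
      obtain ⟨s', rfl⟩ : ∃ s', s = y + s' := ⟨s - y, by omega⟩
      obtain ⟨i1, i2⟩ := ih x r' y s' (by omega) (by omega) (by omega) (by omega) (by nlinarith)
      rw [sbPath_L (x + y) (x + r' + (y + s')) (r' + s') (by omega) (by omega) (by omega),
        sbPath_L (x + (x + y)) _ (r' + (r' + s')) (by omega) (by omega) (by omega),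
        sbPath_L (x + y + y) _ (r' + s' + s') (by omega) (by omega) (by omega), i1, i2]
      simp
    · have h2 : s < 2 * y := by
        by_contra hc
        have := Nat.mul_le_mul h1 (not_lt.mp hc)
        nlinarith
      obtain ⟨x', hx'⟩ : ∃ x', x' + r = x + x := ⟨2 * x - r, by omega⟩
      obtain ⟨y', hy'⟩ : ∃ y', y' + s = y + y := ⟨2 * y - s, by omega⟩
      have hd : x * y' = x' * y + 1 := by
        have e1 : x * (y' + s) = x * (y + y) := by rw [hy']
        have e2 : (x' + r) * y = (x + x) * y := by rw [hx']
        nlinarith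
      obtain ⟨i1, i2⟩ := ih x' x y' y (by omega) (by omega) (by omega) (by omega) hd
      rw [sbPath_R (x + y) (r + s) (x' + y') (by omega) (by omega) (by omega),
        sbPath_R (x + (x + y)) _ (x' + (x' + y')) (by omega) (by omega) (by omega),
        sbPath_R (x + y + y) _ (x' + y' + y') (by omega) (by omega) (by omega), i1, i2]
      simp
    · constructor
      · have := sbPath_L 1 3 2 (by omega) (by omega) (by omega)
        simpa [sbPath_half] using this
      · have := sbPath_R 2 3 1 (by omega) (by omega) (by omega)
        simpa [sbPath_half] using this

theorem sbPath_rev (n : ℕ) : ∀ (x r y s : ℕ), r + s ≤ n → 1 ≤ r → 1 ≤ s → y ≤ s →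
    r * y = x * s + 1 →
    sbPath r (r + s) = (sbPath (x + y) (r + s)).reverse := by
  induction n with
  | zero => intros; omega
  | succ n ih =>
    intro x r y s hn hr hs hys h
    have hxr : x < r := by
      by_contra hc
      have := Nat.mul_le_mul (not_lt.mp hc) hys
      omega
    rcases lt_trichotomy r s with hrs | hrs | hrs
    · obtain ⟨s', rfl⟩ : ∃ s', s = r + s' := ⟨s - r, by omega⟩
      have hxy : x ≤ y := by
        by_contra hc
        have := Nat.mul_le_mul_left r (not_le.mp hc).le
        nlinarith
      obtain ⟨y', rfl⟩ : ∃ y', y = x + y' := ⟨y - x, by omega⟩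
      have hd : r * y' = x * s' + 1 := by nlinarith
      have hy' : y' ≤ s' := by
        by_contra hc
        have h1 : r * (s' + 1) ≤ r * y' := Nat.mul_le_mul_left r (by omega)
        have h2 : (x + 1) * s' ≤ r * s' := Nat.mul_le_mul_right s' hxr
        nlinarith
      rw [(sbPath_append (r + s') x r y' s' le_rfl hr (by omega) hy' hd).1,
        sbPath_L r _ (r + s') hr (by omega) rfl,
        ih x r y' s' (by omega) hr (by omega) hy' hd]
      simp
    · subst hrs
      have hr1 : r ∣ 1 := (Nat.dvd_add_right (Dvd.intro_left x rfl)).mp (Dvd.intro y h)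
      have hr1 := Nat.dvd_one.mp hr1
      subst hr1
      have hx : x = 0 := by omega
      have hy : y = 1 := by omega
      subst hx hy
      simp [sbPath_half]
    · obtain ⟨r', rfl⟩ : ∃ r', r = r' + s := ⟨r - s, by omega⟩
      have hxy : y ≤ x := by
        by_contra hc
        have := Nat.mul_le_mul_right s (not_le.mp hc)
        have hy : 1 ≤ r' * y := Nat.mul_pos (by omega) (by omega)
        have h5 : 1 * 1 ≤ r' * y := by omega
        nlinarith
      obtain ⟨x', rfl⟩ : ∃ x', x = x' + y := ⟨x - y, by omega⟩
      have hd : r' * y = x' * s + 1 := by nlinarith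
      rw [(sbPath_append (r' + s) x' r' y s le_rfl (by omega) hs hys hd).2,
        sbPath_R (r' + s) _ r' (by omega) (by omega) (by omega),
        ih x' r' y s (by omega) (by omega) hs hys hd]
      simp

/-- for an irreducible fraction `p/q` with `0 < p < q` and pair of parents
`(x/r, y/s)`, the reversal of the word `w(p/q)` equals `w(r/q)`. -/
theorem rev_word_eq (p q x r y s : ℕ) (hp : 0 < p) (hpq : p < q)
    (hcop : Nat.Coprime p q) (hpar : IsParents x r y s ((p : ℚ) / (q : ℚ))) :
    (w ((p : ℚ) / (q : ℚ))).reverse = w ((r : ℚ) / (q : ℚ)) := by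
  obtain ⟨hr, hs, h, he⟩ := hpar
  have key : r * (x + y) = x * (r + s) + 1 := by nlinarith
  have hc2 : Nat.Coprime (x + y) (r + s) := by
    refine Nat.dvd_one.mp ?_
    have d1 : Nat.gcd (x + y) (r + s) ∣ r * (x + y) := (Nat.gcd_dvd_left _ _).mul_left _
    have d2 : Nat.gcd (x + y) (r + s) ∣ x * (r + s) := (Nat.gcd_dvd_right _ _).mul_left _
    rw [key] at d1
    exact (Nat.dvd_add_right d2).mp d1
  have hc3 : Nat.Coprime r (r + s) := by
    refine Nat.dvd_one.mp ?_
    have d1 : Nat.gcd r (r + s) ∣ r * (x + y) := (Nat.gcd_dvd_left _ _).mul_right _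
    have d2 : Nat.gcd r (r + s) ∣ x * (r + s) := (Nat.gcd_dvd_right _ _).mul_left _
    rw [key] at d1
    exact (Nat.dvd_add_right d2).mp d1
  have hq0 : (q : ℚ) ≠ 0 := by exact_mod_cast (by omega : q ≠ 0)
  have hrs0 : (r : ℚ) + (s : ℚ) ≠ 0 := by exact_mod_cast (by omega : r + s ≠ 0)
  rw [div_eq_div_iff hq0 hrs0] at he
  have he' : p * (r + s) = (x + y) * q := by exact_mod_cast he
  have hq : q = r + s := by
    apply Nat.dvd_antisymm
    · exact hcop.symm.dvd_of_dvd_mul_left (Dvd.intro_left _ he'.symm)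
    · exact hc2.symm.dvd_of_dvd_mul_left (Dvd.intro_left _ he')
  subst hq
  have hpe : p = x + y := Nat.eq_of_mul_eq_mul_right (by omega) he'
  subst hpe
  have hys : y ≤ s := by
    by_contra hc
    have h1 : r * (s + 1) ≤ r * y := Nat.mul_le_mul_left r (by omega)
    have hxr : x + 2 ≤ r := by omega
    have h2 : (x + 2) * s ≤ r * s := Nat.mul_le_mul_right s hxr
    nlinarith
  rw [w_div _ _ (by omega) hcop, w_div _ _ (by omega) hc3,
    sbPath_rev (r + s) x r y s le_rfl hr hs hys h]
end

section
/- Let n ≥ 2 be even and let a1, …, an be positive integers with an ≥ 2. Write [0, a1, …, an] = p/q in lowest terms and let (x/r, y/s) be the pair of parents of p/q. Then [0, 1, an − 1, a_{n−1}, …, a2, a1] = r/q. -/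
/-- `cf [a₀, a₁, …, aₙ]` is the continued fraction
`a₀ + 1/(a₁ + 1/(a₂ + ⋯ + 1/aₙ))`. -/
def cf : List ℕ → ℚ
  | [] => 0
  | [a] => (a : ℚ)
  | a :: t => (a : ℚ) + 1 / cf t

def cfM (l : List ℕ) : Matrix (Fin 2) (Fin 2) ℤ :=
  (l.map (fun a : ℕ => (!![(a : ℤ), 1; 1, 0] : Matrix (Fin 2) (Fin 2) ℤ))).prod

theorem cf_cons' (a : ℕ) (t : List ℕ) : cf (a :: t) = (a : ℚ) + 1 / cf t := by
  cases t with
  | nil => simp [cf]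
  | cons b t => simp [cf]

theorem cfM_cons (a : ℕ) (t : List ℕ) :
    cfM (a :: t) = !![(a : ℤ), 1; 1, 0] * cfM t := by
  simp [cfM]

theorem cfM_cons00 (a : ℕ) (t : List ℕ) :
    cfM (a :: t) 0 0 = a * cfM t 0 0 + cfM t 1 0 := by
  simp [cfM_cons, Matrix.mul_apply, Fin.sum_univ_two]

theorem cfM_cons10 (a : ℕ) (t : List ℕ) :
    cfM (a :: t) 1 0 = cfM t 0 0 := by
  simp [cfM_cons, Matrix.mul_apply, Fin.sum_univ_two]

theorem cfM_det (l : List ℕ) : (cfM l).det = (-1) ^ l.length := by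
  induction l with
  | nil => simp [cfM]
  | cons a t ih =>
    rw [cfM_cons, Matrix.det_mul, ih, Matrix.det_fin_two]
    simp [pow_succ]

theorem cfM_reverse (l : List ℕ) : cfM l.reverse = (cfM l).transpose := by
  unfold cfM
  rw [Matrix.transpose_list_prod, List.map_reverse, List.map_map]
  congr 3
  funext a
  ext i j
  fin_cases i <;> fin_cases j <;> simp

theorem cfM_bounds (l : List ℕ) (hpos : ∀ a ∈ l, 0 < a) :
    0 < cfM l 0 0 ∧ 0 ≤ cfM l 1 0 ∧ cfM l 1 0 ≤ cfM l 0 0 := by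
  induction l with
  | nil => simp [cfM]
  | cons a t ih =>
    obtain ⟨h1, h2, h3⟩ := ih (fun b hb => hpos b (by simp [hb]))
    have ha : (1 : ℤ) ≤ a := by exact_mod_cast hpos a (by simp)
    rw [cfM_cons00, cfM_cons10]
    refine ⟨by nlinarith, by linarith, by nlinarith⟩

theorem cf_eq_cfM (l : List ℕ) (hpos : ∀ a ∈ l, 0 < a) :
    cf l = (cfM l 0 0 : ℚ) / (cfM l 1 0 : ℚ) := by
  induction l with
  | nil => simp [cf, cfM]
  | cons a t ih =>
    have hp : ∀ b ∈ t, 0 < b := fun b hb => hpos b (by simp [hb])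
    have h1 : (cfM t 0 0 : ℚ) ≠ 0 := by exact_mod_cast (cfM_bounds t hp).1.ne'
    rw [cf_cons', ih hp, cfM_cons00, cfM_cons10]
    push_cast
    rw [one_div_div]
    field_simp

theorem cf_rev_one_eq (l : List ℕ) (hne : l ≠ []) (hlen : Even l.length)
    (hpos : ∀ a ∈ l, 0 < a) (hlast : 2 ≤ l.getLast hne)
    (x r y s : ℕ) (hpar : IsParents x r y s (cf (0 :: l))) :
    cf (0 :: 1 :: (l.getLast hne - 1) :: l.reverse.tail)
      = (r : ℚ) / ((cf (0 :: l)).den : ℚ) := by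
  obtain ⟨hr, hs, hdet, hα⟩ := hpar
  have hden : (cf (0 :: l)).den = r + s := by
    have hc : Nat.Coprime (((x + y : ℕ) : ℤ)).natAbs (r + s) := by
      rw [Int.natAbs_natCast, ← Nat.isCoprime_iff_coprime]
      refine ⟨(r : ℤ), -(x : ℤ), ?_⟩
      have : (r : ℤ) * y = x * s + 1 := by exact_mod_cast hdet
      push_cast
      linarith
    have h := Rat.den_div_eq_of_coprime (a := ((x + y : ℕ) : ℤ)) (b := ((r + s : ℕ) : ℤ))
      (by omega) (by rwa [Int.natAbs_natCast (r + s)])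
    have h2 : cf (0 :: l) = (((x + y : ℕ) : ℤ) : ℚ) / (((r + s : ℕ) : ℤ) : ℚ) := by
      rw [hα]; push_cast; rfl
    rw [h2]
    exact_mod_cast h
  have hposr : ∀ a ∈ l.reverse, 0 < a := fun a ha => hpos a (by simpa using ha)
  obtain ⟨A0, A1, A2⟩ := cfM_bounds l hpos
  obtain ⟨-, B1, B2⟩ := cfM_bounds l.reverse hposr
  have hβ := cf_eq_cfM l.reverse hposr
  have hD := cfM_det l
  rw [hlen.neg_one_pow, Matrix.det_fin_two] at hD
  have hγ := cf_eq_cfM l hpos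
  rw [cfM_reverse] at hβ B1 B2
  simp only [Matrix.transpose_apply] at hβ B1 B2
  have hrev : l.reverse = l.getLast hne :: l.reverse.tail := by
    have h0 : l.reverse ≠ [] := by simpa using hne
    rw [← List.head_reverse h0, List.cons_head_tail]
  have hb : cf l.reverse = (l.getLast hne : ℚ) + 1 / cf l.reverse.tail := by
    conv_lhs => rw [hrev]
    rw [cf_cons']
  have ht0 : 0 ≤ cf l.reverse.tail := by
    have hp : ∀ a ∈ l.reverse.tail, 0 < a := fun a ha => hposr a (List.mem_of_mem_tail ha)
    rw [cf_eq_cfM _ hp]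
    obtain ⟨C0, C1, -⟩ := cfM_bounds _ hp
    have C0' : (0 : ℚ) ≤ (cfM l.reverse.tail 0 0 : ℚ) := by exact_mod_cast C0.le
    have C1' : (0 : ℚ) ≤ (cfM l.reverse.tail 1 0 : ℚ) := by exact_mod_cast C1
    positivity
  have hb2 : 2 ≤ cf l.reverse := by
    rw [hb]
    have : (2 : ℚ) ≤ (l.getLast hne : ℚ) := by exact_mod_cast hlast
    have : 0 ≤ 1 / cf l.reverse.tail := by positivity
    linarith
  have hL : cf (0 :: 1 :: (l.getLast hne - 1) :: l.reverse.tail) = 1 - 1 / cf l.reverse := by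
    have e : cf ((l.getLast hne - 1) :: l.reverse.tail) = cf l.reverse - 1 := by
      rw [cf_cons', hb, Nat.cast_sub (by omega)]
      push_cast; ring
    rw [cf_cons', cf_cons', e]
    have n1 : cf l.reverse - 1 ≠ 0 := by linarith
    have n2 : cf l.reverse ≠ 0 := by linarith
    have n3 : (1 : ℚ) + 1 / (cf l.reverse - 1) = cf l.reverse / (cf l.reverse - 1) := by
      field_simp; ring
    push_cast
    rw [n3]
    field_simp
    ring
  rw [cf_cons', hγ, one_div_div] at hα
  rw [hL, hβ, hden]
  generalize cfM l 0 0 = q at *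
  generalize cfM l 1 0 = p at *
  generalize cfM l 0 1 = u at *
  generalize cfM l 1 1 = v at *
  clear hγ hβ hb hb2 hL
  have hq : (q : ℚ) ≠ 0 := by exact_mod_cast A0.ne'
  have hrs : ((r : ℚ) + s) ≠ 0 := by positivity
  have hX : p * (r + s) = (x + y) * q := by
    have : (p : ℚ) * (r + s) = (x + y) * q := by
      push_cast at hα
      rw [zero_add, div_eq_div_iff hq hrs] at hα
      exact hα
    exact_mod_cast this
  have hdet' : (r : ℤ) * y = x * s + 1 := by exact_mod_cast hdet
  have d1 : q ∣ (r + s : ℤ) := by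
    refine IsCoprime.dvd_of_dvd_mul_left (x := q) (y := p) ⟨v, -u, by linarith⟩ ?_
    exact ⟨x + y, by linarith⟩
  have d2 : (r + s : ℤ) ∣ q := by
    refine IsCoprime.dvd_of_dvd_mul_left (y := (x + y : ℤ)) ⟨-(x : ℤ), (r : ℤ), by linarith⟩ ?_
    exact ⟨p, by linarith⟩
  have hqe : q = r + s := Int.dvd_antisymm A0.le (by positivity) d1 d2
  have hpe : p = x + y := by
    apply mul_right_cancel₀ A0.ne'
    rw [← hX, hqe]
  have d3 : q ∣ r + u := by
    refine IsCoprime.dvd_of_dvd_mul_left (x := q) (y := p) ⟨v, -u, by linarith⟩ ?_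
    refine ⟨x + v, ?_⟩
    have : (r : ℤ) * p - x * q = 1 := by rw [hpe, hqe]; linarith
    linarith
  have hru : r + u = q := by
    obtain ⟨k, hk⟩ := d3
    have k1 : 0 < k := by
      by_contra h
      have : q * k ≤ 0 := mul_nonpos_of_nonneg_of_nonpos A0.le (by omega)
      omega
    have k2 : k < 2 := by
      by_contra h
      have : q * 2 ≤ q * k := mul_le_mul_of_nonneg_left (by omega) A0.le
      omega
    have : k = 1 := by omega
    rw [hk, this, mul_one]
  have e1 : (r : ℚ) + u = q := by exact_mod_cast hru
  have e2 : (q : ℚ) = r + s := by exact_mod_cast hqe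
  rw [one_div_div]
  push_cast
  rw [← e2]
  field_simp
  linarith
end

section
/- Let p/q be an irreducible fraction with 0 < p < q, p odd and q even, let (x/r, y/s) be its pair of parents, and write p/q = [0, a1, …, an] with n even and a1, …, an positive integers. Then N0(a1, …, an) is even if and only if x is even, and N0(a1, …, an) is odd if and only if y is even. -/
/-- `N₀(a₁, …, aₙ)`: the number of even integers among `a₁, …, aₙ`. -/
def N0 (l : List ℕ) : ℕ := (l.filter (fun a => a % 2 = 0)).length

theorem cf_zero_cons_cons (a : ℕ) (t : List ℕ) :
    cf (0 :: a :: t) = 1 / ((a : ℚ) + cf (0 :: t)) := by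
  cases t <;> simp [cf]

theorem parity_step (a A B C D N : ℤ) (hd : (A * D - B * C) % 2 = 1)
    (hN : N % 2 = (A * B + C * D + B * C) % 2) :
    (N + (if a % 2 = 0 then 1 else 0)) % 2 =
      ((a * A + C) * (a * B + D) + A * B + (a * B + D) * A) % 2 := by
  rcases Int.emod_two_eq_zero_or_one a with ha | ha <;>
  rcases Int.emod_two_eq_zero_or_one A with hA | hA <;>
  rcases Int.emod_two_eq_zero_or_one B with hB | hB <;>
  rcases Int.emod_two_eq_zero_or_one C with hC | hC <;>
  rcases Int.emod_two_eq_zero_or_one D with hD | hD <;>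
  simp [Int.add_emod, Int.sub_emod, Int.mul_emod, ha, hA, hB, hC, hD] at hd hN ⊢ <;> omega

theorem cf_matrix (l : List ℕ) (hpos : ∀ a ∈ l, 0 < a) :
    ∃ A B C D : ℤ, 0 < A ∧ 0 ≤ B ∧ 0 ≤ C ∧ 0 ≤ D ∧ B ≤ A ∧ B + D ≤ A + C ∧
      A * D - B * C = (-1) ^ l.length ∧ cf (0 :: l) = (C : ℚ) / A ∧
      (N0 l : ℤ) % 2 = (A * B + C * D + B * C) % 2 := by
  induction l with
  | nil => exact ⟨1, 0, 0, 1, by simp [cf, N0]⟩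
  | cons a t ih =>
    obtain ⟨A, B, C, D, hA, hB, hC, hD, h1, h2, h3, h4, h5⟩ :=
      ih (fun b hb => hpos b (by simp [hb]))
    have ha : (1 : ℤ) ≤ a := by exact_mod_cast hpos a (by simp)
    have hq : (0 : ℚ) < A := by exact_mod_cast hA
    have hcq : (0 : ℚ) ≤ C := by exact_mod_cast hC
    have haq : (1 : ℚ) ≤ a := by exact_mod_cast ha
    refine ⟨a * A + C, a * B + D, A, B, by positivity, by positivity, hA.le, hB,
      by nlinarith, by nlinarith, ?_, ?_, ?_⟩
    · rw [List.length_cons, pow_succ, ← h3]; ring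
    · rw [cf_zero_cons_cons, h4]
      have : (0 : ℚ) < a * A + C := by positivity
      push_cast
      field_simp
    · have hd : (A * D - B * C) % 2 = 1 := by
        rw [h3]
        rcases neg_one_pow_eq_or ℤ t.length with h | h <;> rw [h] <;> rfl
      rw [← parity_step a A B C D _ hd h5]
      congr 1
      by_cases h : a % 2 = 0
      · have h' : (a : ℤ) % 2 = 0 := by omega
        simp [N0, h, h']
      · have h' : ¬ (a : ℤ) % 2 = 0 := by omega
        simp only [N0, if_neg h']
        simp [h]

theorem frac_unique (a b c d : ℤ) (hb : 0 < b) (hd : 0 < d) (h1 : IsCoprime a b)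
    (h2 : IsCoprime c d) (h : (a : ℚ) / b = (c : ℚ) / d) : a = c ∧ b = d := by
  have hb' : (b : ℚ) ≠ 0 := by exact_mod_cast hb.ne'
  have hd' : (d : ℚ) ≠ 0 := by exact_mod_cast hd.ne'
  rw [div_eq_div_iff hb' hd'] at h
  have h : a * d = c * b := by exact_mod_cast h
  have e1 : b ∣ d := h1.symm.dvd_of_dvd_mul_left (Dvd.intro_left c h.symm)
  have e2 : d ∣ b := h2.symm.dvd_of_dvd_mul_left (Dvd.intro_left a h)
  have e : b = d := Int.dvd_antisymm hb.le hd.le e1 e2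
  subst e
  exact ⟨mul_right_cancel₀ hb.ne' h, rfl⟩

/-- let `p/q` be irreducible with `0 < p < q`, `p` odd, `q` even, with
pair of parents `(x/r, y/s)`, and let `p/q = [0, a₁, …, aₙ]` with `n` even and all
`aᵢ` positive.  Then `N₀(a₁, …, aₙ)` is even iff `x` is even, and `N₀(a₁, …, aₙ)` is
odd iff `y` is even. -/
theorem N0_parity_of_one_zero_type (p q : ℕ) (hp : 0 < p) (hpq : p < q)
    (hcop : Nat.Coprime p q) (hpodd : Odd p) (hqeven : Even q)
    (x r y s : ℕ) (hpar : IsParents x r y s ((p : ℚ) / (q : ℚ)))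
    (l : List ℕ) (hlen : Even l.length) (hpos : ∀ a ∈ l, 0 < a)
    (hcf : cf (0 :: l) = (p : ℚ) / (q : ℚ)) :
    (Even (N0 l) ↔ Even x) ∧ (Odd (N0 l) ↔ Even y) := by
  obtain ⟨hr, hs, hn, hmed⟩ := hpar
  obtain ⟨A, B, C, D, hA, hB, hC, hD, h1, h2, h3, h4, h5⟩ := cf_matrix l hpos
  rw [hlen.neg_one_pow] at h3
  have hnz : (r : ℤ) * y = x * s + 1 := by exact_mod_cast hn
  have hqz : (0 : ℤ) < q := by omega
  have hcz : IsCoprime (p : ℤ) (q : ℤ) := Nat.isCoprime_iff_coprime.mpr hcop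
  obtain ⟨e1, e2⟩ := frac_unique p q C A hqz hA hcz ⟨-B, D, by linarith⟩
    (by rw [← h4, hcf]; push_cast; rfl)
  obtain ⟨e3, e4⟩ := frac_unique p q (x + y) (r + s) hqz (by omega) hcz
    ⟨r, -x, by linarith⟩ (by push_cast; exact hmed)
  subst e1 e2
  have hx : (x : ℤ) = p - y := by omega
  have hr' : (r : ℤ) = q - s := by omega
  rw [hx, hr'] at hnz
  have key : (q : ℤ) * (y - D) = p * (s - B) := by linarith
  have hdv : (q : ℤ) ∣ s - B := hcz.symm.dvd_of_dvd_mul_left (Dvd.intro _ key)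
  have hsB : (s : ℤ) - B = 0 := by
    apply Int.eq_zero_of_abs_lt_dvd hdv
    rw [abs_lt]; constructor <;> omega
  rw [hsB, mul_zero] at key
  have hyD : (y : ℤ) = D := by
    rcases mul_eq_zero.mp key with h | h <;> omega
  subst hyD
  have hp2 : (p : ℤ) % 2 = 1 := by obtain ⟨k, hk⟩ := hpodd; omega
  have hq2 : (q : ℤ) % 2 = 0 := by obtain ⟨k, hk⟩ := hqeven; omega
  have hd : ((q : ℤ) * y - B * p) % 2 = 1 := by rw [h3]; rfl
  have hB2 : B % 2 = 1 := by
    rcases Int.emod_two_eq_zero_or_one B with h | h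
    · simp [Int.sub_emod, Int.mul_emod, hq2, h] at hd
    · exact h
  have hfin : (N0 l : ℤ) % 2 = (y + 1) % 2 := by
    rw [h5]
    simp [Int.add_emod, Int.mul_emod, hq2, hp2, hB2]
  simp only [Nat.even_iff, Nat.odd_iff]
  constructor <;> constructor <;> intro h <;> omega
end

section
/- Let p/q be an irreducible fraction with 0 < p < q, p even and q odd, let (x/r, y/s) be its pair of parents, and write p/q = [0, a1, …, an] with n even and a1, …, an positive integers. Then x and y are both odd; moreover N0(a1, …, an) is even if and only if s is even, and N0(a1, …, an) is odd if and only if r is even. -/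
/-- Matrix entries of the product of `[[0,1],[1,a_i]]`. -/
def cm : List ℕ → ℕ × ℕ × ℕ × ℕ
  | [] => (1, 0, 0, 1)
  | a :: t => ((cm t).2.2.1, (cm t).2.2.2, (cm t).1 + a * (cm t).2.2.1,
      (cm t).2.1 + a * (cm t).2.2.2)

lemma cm_pos (l : List ℕ) (h : ∀ a ∈ l, 0 < a) : 0 < (cm l).2.2.2 := by
  induction l with
  | nil => simp [cm]
  | cons a t ih =>
    have := ih (fun b hb => h b (by simp [hb]))
    have ha := h a (by simp)
    simp only [cm]
    positivity

lemma cf_cm (l : List ℕ) (h : ∀ a ∈ l, 0 < a) (a : ℕ) :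
    cf (a :: l) = a + ((cm l).2.1 : ℚ) / (cm l).2.2.2 := by
  induction l generalizing a with
  | nil => simp [cm, cf]
  | cons b t ih =>
    have h' : ∀ c ∈ t, 0 < c := fun c hc => h c (by simp [hc])
    have hD : ((cm t).2.2.2 : ℚ) ≠ 0 := by
      have := cm_pos t h'
      positivity
    have e : cf (a :: b :: t) = a + 1 / cf (b :: t) := rfl
    rw [e, ih h' b]
    simp only [cm]
    push_cast
    rw [show (b : ℚ) + ((cm t).2.1 : ℚ) / (cm t).2.2.2
      = ((cm t).2.1 + b * (cm t).2.2.2) / (cm t).2.2.2 by field_simp; ring, one_div_div]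

lemma cm_det (l : List ℕ) :
    ((cm l).1 : ℤ) * (cm l).2.2.2 - (cm l).2.1 * (cm l).2.2.1 = (-1) ^ l.length := by
  induction l with
  | nil => simp [cm]
  | cons a t ih =>
    simp only [cm, List.length_cons, pow_succ, ← ih]
    push_cast
    ring

lemma cm_bd (l : List ℕ) (h : ∀ a ∈ l, 0 < a) (hl : l ≠ []) :
    (cm l).1 ≤ (cm l).2.1 ∧ (cm l).2.2.1 ≤ (cm l).2.2.2 ∧ 1 ≤ (cm l).2.2.1 := by
  induction l with
  | nil => simp at hl
  | cons a t ih =>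
    have ha := h a (by simp)
    rcases eq_or_ne t [] with rfl | ht
    · simp [cm]; omega
    · obtain ⟨h1, h2, h3⟩ := ih (fun b hb => h b (by simp [hb])) ht
      simp only [cm]
      refine ⟨h2, by gcongr, ?_⟩
      have := Nat.mul_le_mul ha h3
      omega

lemma cm_par (l : List ℕ) :
    (N0 l % 2 = 0 ∧
      (((cm l).1 % 2 = 1 ∧ (cm l).2.1 % 2 = 0 ∧ (cm l).2.2.1 % 2 = 0 ∧ (cm l).2.2.2 % 2 = 1) ∨
       ((cm l).1 % 2 = 0 ∧ (cm l).2.1 % 2 = 1 ∧ (cm l).2.2.1 % 2 = 1 ∧ (cm l).2.2.2 % 2 = 1) ∨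
       ((cm l).1 % 2 = 1 ∧ (cm l).2.1 % 2 = 1 ∧ (cm l).2.2.1 % 2 = 1 ∧ (cm l).2.2.2 % 2 = 0))) ∨
    (N0 l % 2 = 1 ∧
      (((cm l).1 % 2 = 0 ∧ (cm l).2.1 % 2 = 1 ∧ (cm l).2.2.1 % 2 = 1 ∧ (cm l).2.2.2 % 2 = 0) ∨
       ((cm l).1 % 2 = 1 ∧ (cm l).2.1 % 2 = 1 ∧ (cm l).2.2.1 % 2 = 0 ∧ (cm l).2.2.2 % 2 = 1) ∨
       ((cm l).1 % 2 = 1 ∧ (cm l).2.1 % 2 = 0 ∧ (cm l).2.2.1 % 2 = 1 ∧ (cm l).2.2.2 % 2 = 1))) := by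
  induction l with
  | nil => simp [cm, N0]
  | cons a t ih =>
    simp only [cm]
    generalize (cm t).1 = A at *
    generalize (cm t).2.1 = B at *
    generalize (cm t).2.2.1 = C at *
    generalize (cm t).2.2.2 = D at *
    rcases Nat.mod_two_eq_zero_or_one a with ha | ha
    · have hN : N0 (a :: t) = N0 t + 1 := by simp [N0, ha]
      have h1 : (a * C) % 2 = 0 := by simp [Nat.mul_mod, ha]
      have h2 : (a * D) % 2 = 0 := by simp [Nat.mul_mod, ha]
      rw [hN]
      rcases ih with ⟨i0, ⟨i1, i2, i3, i4⟩ | ⟨i1, i2, i3, i4⟩ | ⟨i1, i2, i3, i4⟩⟩ |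
        ⟨i0, ⟨i1, i2, i3, i4⟩ | ⟨i1, i2, i3, i4⟩ | ⟨i1, i2, i3, i4⟩⟩ <;>
      simp [Nat.add_mod, h1, h2, i0, i1, i2, i3, i4]
    · have hN : N0 (a :: t) = N0 t := by simp [N0, ha]
      have h1 : (a * C) % 2 = C % 2 := by simp [Nat.mul_mod, ha]
      have h2 : (a * D) % 2 = D % 2 := by simp [Nat.mul_mod, ha]
      rw [hN]
      rcases ih with ⟨i0, ⟨i1, i2, i3, i4⟩ | ⟨i1, i2, i3, i4⟩ | ⟨i1, i2, i3, i4⟩⟩ |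
        ⟨i0, ⟨i1, i2, i3, i4⟩ | ⟨i1, i2, i3, i4⟩ | ⟨i1, i2, i3, i4⟩⟩ <;>
      simp [Nat.add_mod, h1, h2, i0, i1, i2, i3, i4]

lemma frac_eq {a b c d : ℕ} (hb : 0 < b) (hd : 0 < d) (h1 : Nat.Coprime a b)
    (h2 : Nat.Coprime c d) (h : (a : ℚ) / b = (c : ℚ) / d) : a = c ∧ b = d := by
  have hb' : (b : ℚ) ≠ 0 := by positivity
  have hd' : (d : ℚ) ≠ 0 := by positivity
  rw [div_eq_div_iff hb' hd'] at h
  have h' : a * d = c * b := by exact_mod_cast h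
  have e1 : b ∣ d := h1.symm.dvd_of_dvd_mul_left (h' ▸ Dvd.intro_left c rfl)
  have e2 : d ∣ b := h2.symm.dvd_of_dvd_mul_left (h' ▸ Dvd.intro_left a rfl)
  have e := Nat.dvd_antisymm e1 e2
  subst e
  exact ⟨Nat.eq_of_mul_eq_mul_right hb h', rfl⟩

/-- let `p/q` be irreducible with `0 < p < q`, `p` even, `q` odd, with
pair of parents `(x/r, y/s)`, and let `p/q = [0, a₁, …, aₙ]` with `n` even and all
`aᵢ` positive.  Then `x, y` are both odd; moreover `N₀(a₁, …, aₙ)` is even iff `s`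
is even, and `N₀(a₁, …, aₙ)` is odd iff `r` is even. -/
theorem N0_parity_of_zero_one_type (p q : ℕ) (hp : 0 < p) (hpq : p < q)
    (hcop : Nat.Coprime p q) (hpeven : Even p) (hqodd : Odd q)
    (x r y s : ℕ) (hpar : IsParents x r y s ((p : ℚ) / (q : ℚ)))
    (l : List ℕ) (hlen : Even l.length) (hpos : ∀ a ∈ l, 0 < a)
    (hcf : cf (0 :: l) = (p : ℚ) / (q : ℚ)) :
    Odd x ∧ Odd y ∧ (Even (N0 l) ↔ Even s) ∧ (Odd (N0 l) ↔ Even r) := by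
  obtain ⟨hr, hs, hdet, hα⟩ := hpar
  have hl : l ≠ [] := by
    rintro rfl
    have : (p : ℚ) / q ≠ 0 := by
      have : 0 < q := by omega
      positivity
    exact this (by rw [← hcf]; simp [cf])
  have hD := cm_pos l hpos
  have hd := cm_det l
  obtain ⟨-, b2, b3⟩ := cm_bd l hpos hl
  have hpr := cm_par l
  rw [cf_cm l hpos 0] at hcf
  rw [hlen.neg_one_pow] at hd
  generalize (cm l).1 = A at *
  generalize (cm l).2.1 = B at *
  generalize (cm l).2.2.1 = C at *
  generalize (cm l).2.2.2 = D at *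
  have c1 : Nat.Coprime B D := by
    rw [← Nat.isCoprime_iff_coprime]
    exact ⟨-C, A, by linarith⟩
  have hdet' : (r : ℤ) * y = x * s + 1 := by exact_mod_cast hdet
  have c2 : Nat.Coprime (x + y) (r + s) := by
    rw [← Nat.isCoprime_iff_coprime]
    refine ⟨-s, y, ?_⟩
    push_cast
    linarith
  obtain ⟨rfl, rfl⟩ := frac_eq (by omega) hD hcop c1 (by rw [← hcf]; simp)
  obtain ⟨e1, e2⟩ := frac_eq (by omega) (by omega) hcop c2 (by rw [hα]; push_cast; rfl)
  have key : (q : ℤ) * (A - y) = p * (C - s) := by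
    have : (q : ℤ) * y - p * s = 1 := by
      rw [e1, e2]; push_cast; linarith
    linarith
  have hdv : (q : ℤ) ∣ (C - s : ℤ) := by
    have : IsCoprime (q : ℤ) (p : ℤ) := Nat.isCoprime_iff_coprime.2 hcop.symm
    exact this.dvd_of_dvd_mul_left (key ▸ Dvd.intro _ rfl)
  have hz : (C - s : ℤ) = 0 := by
    apply Int.eq_zero_of_abs_lt_dvd hdv
    rw [abs_lt]
    constructor <;> omega
  rw [hz, mul_zero] at key
  have hA : (A - y : ℤ) = 0 := by
    rcases mul_eq_zero.1 key with h | h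
    · omega
    · exact h
  simp only [Nat.even_iff, Nat.odd_iff] at *
  omega
end
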